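/- Let A be an invertible real 2×2 matrix all of whose (complex) eigenvalues have modulus strictly greater than 1, and let S ⊆ ℝ² be compact. Then there exists K ∈ ℕ such that for all k ≥ K and all n₁, n₂ ∈ ℤ²: if (A^k n₁ + S) ∩ (A^k n₂ + S) ≠ ∅ then n₁ = n₂. In particular, for all k ≥ K the translates of S by the lattice A^k ℤ² are pairwise disjoint. -/

import Mathlib

open Set

open Bornology Filter Topology
open scoped ENNReal Matrix Pointwise

/-!
Since the spectrum of `A` lies outside the closed unit disc, that of `A⁻¹` lies in the open unit
disc, so Gelfand's formula gives `A⁻ᵏ → 0`. If the translates of `S` by `Aᵏ n₁` and `Aᵏ n₂` meet,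
then `n₁ - n₂ ∈ A⁻ᵏ (S - S)`. As `S - S` is bounded, for large `k` this set lies in the open unit
ball, which contains no nonzero integer vector.
-/

/-- Expansive elements of a complex algebra: every spectral value has modulus greater than one.
A real matrix is expansive in the usual sense when its complexification satisfies this. -/
def IsExpansive {B : Type*} [Ring B] [Algebra ℂ B] (a : B) : Prop :=
  ∀ z ∈ spectrum ℂ a, 1 < ‖z‖

namespace IsExpansive

variable {B : Type*} [Ring B] [Algebra ℂ B]

theorem isUnit {a : B} (ha : IsExpansive a) : IsUnit a := by
  refine (spectrum.zero_notMem_iff ℂ).mp fun h_zero => ?_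
  exact absurd (ha 0 h_zero) (by simp)

theorem norm_lt_one_of_mem_spectrum_inv {u : Bˣ} (hu : IsExpansive (u : B)) {z : ℂ}
    (hz : z ∈ spectrum ℂ (↑u⁻¹ : B)) : ‖z‖ < 1 := by
  have hinv : 1 < ‖z‖⁻¹ := by
    simpa only [norm_inv] using hu z⁻¹ (spectrum.inv₀_mem_iff.mpr hz)
  exact (one_lt_inv_iff₀.mp hinv).2

end IsExpansive

section BanachAlgebra

variable {B : Type*} [NormedRing B] [NormedAlgebra ℂ B] [CompleteSpace B]

theorem isTopologicallyNilpotent_of_spectralRadius_lt_one {a : B} (ha : spectralRadius ℂ a < 1) :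
    IsTopologicallyNilpotent a := by
  obtain ⟨r, har, hr⟩ := ENNReal.lt_iff_exists_nnreal_btwn.mp ha
  have hr_one : (r : ℝ) < 1 := by exact_mod_cast hr
  suffices ∀ᶠ n : ℕ in atTop, ‖a ^ n‖ ≤ (r : ℝ) ^ n from
    squeeze_zero_norm' this (tendsto_pow_atTop_nhds_zero_of_lt_one r.coe_nonneg hr_one)
  have gelfand := spectrum.pow_nnnorm_pow_one_div_tendsto_nhds_spectralRadius a
  filter_upwards [gelfand.eventually_lt_const har, eventually_gt_atTop 0] with n hn hn_pos
  rw [one_div, ENNReal.rpow_inv_lt_iff (Nat.cast_pos.mpr hn_pos), ENNReal.rpow_natCast] at hn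
  exact_mod_cast hn.le

theorem IsExpansive.isTopologicallyNilpotent_inv {u : Bˣ} (hu : IsExpansive (u : B)) :
    IsTopologicallyNilpotent (↑u⁻¹ : B) := by
  apply isTopologicallyNilpotent_of_spectralRadius_lt_one
  nontriviality B
  refine spectrum.spectralRadius_lt_of_forall_lt (r := 1) _ fun z hz => ?_
  exact_mod_cast hu.norm_lt_one_of_mem_spectrum_inv hz

end BanachAlgebra

open scoped Matrix.Norms.Operator in
theorem tendstoUniformlyOn_mulVec_zero {m n 𝕜 ι : Type*} [Finite m] [Fintype n] [NormedRing 𝕜]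
    {l : Filter ι} {M : ι → Matrix m n 𝕜} (hM : Tendsto M l (𝓝 0))
    {T : Set (n → 𝕜)} (hT : IsBounded T) : TendstoUniformlyOn (fun i v => M i *ᵥ v) 0 l T := by
  cases nonempty_fintype m
  obtain ⟨R, hR, hTR⟩ := hT.exists_pos_norm_le
  refine Metric.tendstoUniformlyOn_iff.mpr fun ε hε => ?_
  have hnorm : ∀ᶠ i in l, ‖M i‖ < ε / R :=
    (tendsto_zero_iff_norm_tendsto_zero.mp hM).eventually_lt_const (div_pos hε hR)
  filter_upwards [hnorm] with i hi v hv
  calc dist 0 (M i *ᵥ v) = ‖M i *ᵥ v‖ := dist_zero_left _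
    _ ≤ ‖M i‖ * ‖v‖ := Matrix.linfty_opNorm_mulVec _ _
    _ ≤ ‖M i‖ * R := by gcongr; exact hTR v hv
    _ < ε := (lt_div_iff₀ hR).mp hi

section Matrix

variable {m : Type*} [Fintype m] [DecidableEq m]

theorem isUnit_of_isExpansive_map_ofReal {A : Matrix m m ℝ}
    (hA : IsExpansive (A.map Complex.ofReal)) : IsUnit A := by
  rw [Matrix.isUnit_iff_isUnit_det, ← isUnit_map_iff Complex.ofRealHom, RingHom.map_det]
  exact (Matrix.isUnit_iff_isUnit_det _).mp hA.isUnit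

open scoped Matrix.Norms.Operator in
theorem isTopologicallyNilpotent_inv_of_isExpansive_map_ofReal {A : Matrix m m ℝ}
    (hA : IsExpansive (A.map Complex.ofReal)) : IsTopologicallyNilpotent A⁻¹ := by
  obtain ⟨u, rfl⟩ := isUnit_of_isExpansive_map_ofReal hA
  let toComplex : Matrix m m ℝ →+* Matrix m m ℂ := Complex.ofRealHom.mapMatrix
  have norm_toComplex (M : Matrix m m ℝ) : ‖toComplex M‖ = ‖M‖ := by
    simp [toComplex, Matrix.linfty_opNorm_def]
  let v : (Matrix m m ℂ)ˣ := Units.map (toComplex : Matrix m m ℝ →* Matrix m m ℂ) u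
  have hv : IsExpansive (v : Matrix m m ℂ) := hA
  have hlim : Tendsto (fun k : ℕ => toComplex ↑u⁻¹ ^ k) atTop (𝓝 0) :=
    hv.isTopologicallyNilpotent_inv
  rw [← Matrix.coe_units_inv]
  refine tendsto_zero_iff_norm_tendsto_zero.mpr ?_
  simpa only [← map_pow, norm_toComplex, norm_zero] using hlim.norm

theorem sub_mem_inv_mulVec_image_of_translates_inter_nonempty {R : Type*} [CommRing R]
    {M : Matrix m m R} (hM : IsUnit M) {S : Set (m → R)} {x y : m → R}
    (h : (((fun s => M *ᵥ x + s) '' S) ∩ ((fun s => M *ᵥ y + s) '' S)).Nonempty) :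
    x - y ∈ (M⁻¹ *ᵥ ·) '' (S - S) := by
  obtain ⟨_, ⟨s, hs, rfl⟩, t, ht, hst : M *ᵥ y + t = M *ᵥ x + s⟩ := h
  refine ⟨t - s, sub_mem_sub ht hs, ?_⟩
  have hsub : t - s = M *ᵥ (x - y) := by
    rw [Matrix.mulVec_sub, sub_eq_sub_iff_add_eq_add, add_comm t, hst]
  have hdet : IsUnit M.det := (Matrix.isUnit_iff_isUnit_det M).mp hM
  simp only [hsub, Matrix.mulVec_mulVec, Matrix.nonsing_inv_mul M hdet, Matrix.one_mulVec]

end Matrix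

theorem eq_of_norm_intCast_sub_intCast_lt_one {m : Type*} [Fintype m] {n₁ n₂ : m → ℤ}
    (h : ‖(fun i => (n₁ i : ℝ)) - fun i => (n₂ i : ℝ)‖ < 1) : n₁ = n₂ := by
  ext i
  have hi : |(n₁ i : ℝ) - n₂ i| < 1 := (norm_le_pi_norm _ i).trans_lt h
  exact sub_eq_zero.mp (Int.abs_lt_one_iff.mp (by exact_mod_cast hi))

theorem expansive_matrix_separates_translates_general {m : Type*} [Fintype m] [DecidableEq m]
    {A : Matrix m m ℝ} (hA : IsExpansive (A.map Complex.ofReal))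
    {S : Set (m → ℝ)} (hS : IsBounded S) :
    ∃ K : ℕ, ∀ k ≥ K, ∀ n₁ n₂ : m → ℤ,
      (((fun s => (A ^ k) *ᵥ (fun i => (n₁ i : ℝ)) + s) '' S) ∩
        ((fun s => (A ^ k) *ᵥ (fun i => (n₂ i : ℝ)) + s) '' S)).Nonempty →
      n₁ = n₂ := by
  have hunif : TendstoUniformlyOn (fun k v => (A⁻¹ ^ k) *ᵥ v) 0 atTop (S - S) :=
    tendstoUniformlyOn_mulVec_zero
      (isTopologicallyNilpotent_inv_of_isExpansive_map_ofReal hA) (hS.sub hS)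
  obtain ⟨K, hK⟩ := eventually_atTop.mp (Metric.tendstoUniformlyOn_iff.mp hunif 1 one_pos)
  refine ⟨K, fun k hk n₁ n₂ hmeet => eq_of_norm_intCast_sub_intCast_lt_one ?_⟩
  have hAk : IsUnit (A ^ k) := (isUnit_of_isExpansive_map_ofReal hA).pow k
  obtain ⟨v, hv, hvn⟩ := sub_mem_inv_mulVec_image_of_translates_inter_nonempty hAk hmeet
  rw [← hvn, ← Matrix.inv_pow']
  simpa only [Pi.zero_apply, dist_zero_left] using hK k hk v hv

/-- If `A` is an invertible real `2×2` matrix all of whose complex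
eigenvalues have modulus `> 1`, and `S ⊆ ℝ²` is compact, then there exists `K` such that
for all `k ≥ K` the translates of `S` by the lattice `A^k ℤ²` are pairwise disjoint:
if `(A^k n₁ + S) ∩ (A^k n₂ + S) ≠ ∅` then `n₁ = n₂`. -/
theorem expansive_matrix_separates_translates
    (A : Matrix (Fin 2) (Fin 2) ℝ) (hA : IsUnit A)
    (heig : ∀ z ∈ spectrum ℂ (A.map (Complex.ofReal : ℝ → ℂ)), 1 < ‖z‖)
    (S : Set (Fin 2 → ℝ)) (hS : IsCompact S) :
    ∃ K : ℕ, ∀ k ≥ K, ∀ n₁ n₂ : Fin 2 → ℤ,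
      (((fun s => (A ^ k).mulVec (fun i => (n₁ i : ℝ)) + s) '' S) ∩
        ((fun s => (A ^ k).mulVec (fun i => (n₂ i : ℝ)) + s) '' S)).Nonempty →
      n₁ = n₂ :=
  expansive_matrix_separates_translates_general heig hS.isBounded
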